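/- Let x be an arbitrary vertex of a connected graph G of odd order. Then G has a 1-perfect forest F such that x is the unique vertex of F having even degree (possibly zero) in F. -/

import Mathlib

open SimpleGraph

/-- The degree of `v` in `F`, defined via `Set.ncard` so that no decidability
instances are needed. -/
noncomputable def fdeg {V : Type*} (F : SimpleGraph V) (v : V) : ℕ :=
  (F.neighborSet v).ncard

/-- `F` is a semiperfect spanning forest of `G`: `F` is a spanning subgraph of `G`
that is a forest, and every connected component of `F` is an induced subgraph of `G`. -/
def IsSemiperfectForest {V : Type*} (G F : SimpleGraph V) : Prop :=
  F ≤ G ∧ F.IsAcyclic ∧ ∀ x y : V, F.Reachable x y → G.Adj x y → F.Adj x y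

open Classical in
/-- mod 2 boundary of an edge chain -/
noncomputable def bdry {V : Type*} [Fintype V] (f : Sym2 V → ZMod 2) (v : V) : ZMod 2 :=
  ∑ w, f s(v, w)

open Classical in
/-- mod 2 chain of a walk -/
noncomputable def chn {V : Type*} {G : SimpleGraph V} {a b : V} (p : G.Walk a b) (e : Sym2 V) : ZMod 2 :=
  (p.edges.count e : ZMod 2)

open Classical in
/-- indicator -/
noncomputable def ind {V : Type*} (a v : V) : ZMod 2 := if v = a then 1 else 0

open Classical in
lemma bdry_single {V : Type*} [Fintype V] (a b : V) (h : a ≠ b) (v : V) :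
    bdry (fun e => if s(a, b) = e then 1 else 0) v = ind a v + ind b v := by
  unfold bdry ind
  by_cases h1 : v = a
  · subst h1
    have : ∀ w, (s(v, b) = s(v, w)) ↔ b = w := by intro w; simp; grind
    simp only [this]; simp [h]
  · by_cases h2 : v = b
    · subst h2
      have : ∀ w, (s(a, v) = s(v, w)) ↔ a = w := by
        intro w; rw [Sym2.eq_swap]; simp; grind
      simp only [this]; simp [h1]
    · have : ∀ w, ¬ (s(a, b) = s(v, w)) := by
        intro w; rw [Sym2.eq_iff]; rintro (⟨rfl, _⟩ | ⟨_, rfl⟩) <;> simp_all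
      simp [this, h1, h2]

lemma bdry_add {V : Type*} [Fintype V] (f g : Sym2 V → ZMod 2) (v : V) :
    bdry (fun e => f e + g e) v = bdry f v + bdry g v := by
  simp [bdry, Finset.sum_add_distrib]

lemma two_self (a : ZMod 2) : a + a = 0 := by revert a; decide

lemma bdry_chn {V : Type*} [Fintype V] {G : SimpleGraph V} {a b : V} (p : G.Walk a b) (v : V) :
    bdry (chn p) v = ind a v + ind b v := by
  classical
  induction p with
  | nil => simp [bdry, chn, two_self]
  | @cons a c b h p ih =>
    have : chn (Walk.cons h p) = fun e => chn p e + (if s(a, c) = e then 1 else 0) := by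
      funext e
      simp only [chn, Walk.edges_cons, List.count_cons, beq_iff_eq]
      push_cast
      congr
    rw [this, bdry_add, ih]
    have h2 := bdry_single a c h.ne v
    have h3 := two_self (ind c v)
    rw [show (fun e => if s(a, c) = e then (1 : ZMod 2) else 0) = (fun e => if s(a, c) = e then 1 else 0) from rfl]
    have h4 : bdry (fun e => if s(a, c) = e then (1 : ZMod 2) else 0) v = ind a v + ind c v := by
      convert h2
    rw [h4]
    linear_combination h3

lemma chn_not_mem {V : Type*} {G : SimpleGraph V} {a b : V} (p : G.Walk a b) (e : Sym2 V)
    (h : e ∉ p.edges) : chn p e = 0 := by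
  classical
  simp [chn, List.count_eq_zero_of_not_mem h]

lemma chn_mem {V : Type*} {G : SimpleGraph V} {a b : V} (p : G.Walk a b) (hp : p.IsPath) (e : Sym2 V)
    (h : e ∈ p.edges) : chn p e = 1 := by
  classical
  simp [chn, List.count_eq_one_of_mem hp.isTrail.edges_nodup h]

lemma zmod_ne (a : ZMod 2) : a ≠ 0 ↔ a = 1 := by revert a; decide

lemma fdeg_bdry {V : Type*} [Fintype V] (F : SimpleGraph V) (f : Sym2 V → ZMod 2)
    (hF : ∀ a b, F.Adj a b ↔ f s(a, b) ≠ 0) (v : V) : (fdeg F v : ZMod 2) = bdry f v := by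
  classical
  have h1 : F.neighborSet v = ((Finset.univ.filter fun w => f s(v, w) ≠ 0 : Finset V) : Set V) := by
    ext w; simp [hF]
  unfold fdeg bdry
  rw [h1, Set.ncard_coe_finset, Finset.card_filter]
  push_cast
  refine Finset.sum_congr rfl fun w _ => ?_
  by_cases h : f s(v, w) = 0
  · simp [h]
  · rw [if_pos h, (zmod_ne _).1 h]

lemma exists_chain {V : Type*} [Fintype V] (G : SimpleGraph V) (hG : G.Connected)
    (hodd : Odd (Fintype.card V)) (x : V) :
    ∃ f : Sym2 V → ZMod 2, (∀ e, f e ≠ 0 → e ∈ G.edgeSet) ∧ ∀ v, bdry f v = 1 + ind x v := by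
  classical
  choose p hp using fun v => (hG.preconnected x v).exists_isPath
  refine ⟨fun e => ∑ v, chn (p v) e, ?_, ?_⟩
  · intro e he
    obtain ⟨v, _, hv⟩ := Finset.exists_ne_zero_of_sum_ne_zero he
    by_contra h
    exact hv (chn_not_mem _ _ fun h' => h ((p v).edges_subset_edgeSet h'))
  · intro v
    have : bdry (fun e => ∑ v, chn (p v) e) v = ∑ u, bdry (chn (p u)) v := by
      unfold bdry; exact Finset.sum_comm
    rw [this]
    simp only [bdry_chn, Finset.sum_add_distrib]
    have h2 : (Fintype.card V : ZMod 2) = 1 := ZMod.natCast_eq_one_iff_odd.2 hodd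
    have h3 : ∑ u : V, ind u v = 1 := by simp [ind]
    rw [h3]
    simp [h2, add_comm]

/-- Let `x` be an arbitrary vertex of a connected graph `G` of odd order.
Then `G` has a 1-perfect forest `F` (a semiperfect spanning forest with exactly one
vertex of even degree) such that `x` is the unique vertex of even degree in `F`. -/
theorem exists_one_perfect_forest_even_at {V : Type*} [Fintype V]
    (G : SimpleGraph V) (hG : G.Connected) (hodd : Odd (Fintype.card V)) (x : V) :
    ∃ F : SimpleGraph V, IsSemiperfectForest G F ∧
      Even (fdeg F x) ∧ ∀ w : V, w ≠ x → Odd (fdeg F w) := by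
  classical
  obtain ⟨f₀, h₀⟩ := exists_chain G hG hodd x
  obtain ⟨f, hf, hmin⟩ := Finset.exists_min_image
    (Finset.univ.filter fun f : Sym2 V → ZMod 2 =>
      (∀ e, f e ≠ 0 → e ∈ G.edgeSet) ∧ ∀ v, bdry f v = 1 + ind x v)
    (fun f => (Finset.univ.filter fun e => f e ≠ 0).card) ⟨f₀, by simpa using h₀⟩
  simp only [Finset.mem_filter, Finset.mem_univ, true_and] at hf hmin
  obtain ⟨hfG, hfb⟩ := hf
  let F : SimpleGraph V :=
    { Adj := fun a b => f s(a, b) ≠ 0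
      symm := ⟨fun a b h => by rw [Sym2.eq_swap]; exact h⟩
      loopless := ⟨fun a h => G.loopless.irrefl a (hfG _ h)⟩ }
  have hF : ∀ a b, F.Adj a b ↔ f s(a, b) ≠ 0 := fun a b => Iff.rfl
  have hFe : ∀ e, e ∈ F.edgeSet ↔ f e ≠ 0 := fun e => Sym2.ind (fun a b => Iff.rfl) e
  have key : ∀ u v (p : F.Walk u v), p.IsPath → G.Adj u v → s(u, v) ∈ p.edges := by
    intro u v p hp huv
    by_contra hn
    have hlen : 2 ≤ p.edges.length := by
      cases p with
      | nil => exact absurd huv (G.loopless.irrefl _)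
      | cons h q =>
        cases q with
        | nil => simp at hn
        | cons h' q' => simp
    have hm := hmin (fun e => (f e + chn p e) + (if s(u, v) = e then 1 else 0)) ⟨?_, ?_⟩
    · have hsub : (Finset.univ.filter fun e =>
          (f e + chn p e) + (if s(u, v) = e then 1 else 0) ≠ 0) ⊆
          insert s(u, v) ((Finset.univ.filter fun e => f e ≠ 0) \ p.edges.toFinset) := by
        intro e he
        simp only [Finset.mem_filter, Finset.mem_univ, true_and, Finset.mem_insert,
          Finset.mem_sdiff, List.mem_toFinset] at he ⊢
        by_cases h1 : s(u, v) = e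
        · exact Or.inl h1.symm
        right
        rw [if_neg h1, add_zero] at he
        by_cases h2 : e ∈ p.edges
        · have h3 := (zmod_ne _).1 ((hFe e).1 (p.edges_subset_edgeSet h2))
          rw [h3, chn_mem p hp e h2] at he
          exact absurd (two_self 1) he
        · rw [chn_not_mem p e h2, add_zero] at he
          exact ⟨he, h2⟩
      have c1 := Finset.card_le_card hsub
      have c2 := Finset.card_insert_le s(u, v)
        ((Finset.univ.filter fun e => f e ≠ 0) \ p.edges.toFinset)
      have hs : p.edges.toFinset ⊆ Finset.univ.filter fun e => f e ≠ 0 := by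
        intro e he
        simp only [List.mem_toFinset] at he
        simpa using (hFe e).1 (p.edges_subset_edgeSet he)
      have c3 := Finset.card_sdiff_add_card_eq_card hs
      rw [List.toFinset_card_of_nodup hp.isTrail.edges_nodup] at c3
      omega
    · intro e he
      by_cases h1 : s(u, v) = e
      · rw [← h1]; exact huv
      rw [if_neg h1, add_zero] at he
      by_cases h2 : e ∈ p.edges
      · exact hfG e ((hFe e).1 (p.edges_subset_edgeSet h2))
      · rw [chn_not_mem p e h2, add_zero] at he
        exact hfG e he
    · intro w
      have h4 : bdry (fun e => if s(u, v) = e then (1 : ZMod 2) else 0) w = ind u w + ind v w := by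
        convert bdry_single u v huv.ne w
      rw [bdry_add, bdry_add f (chn p), hfb, bdry_chn, h4, add_assoc, two_self, add_zero]
  have hdeg : ∀ w, (fdeg F w : ZMod 2) = 1 + ind x w := fun w => by rw [fdeg_bdry F f hF, hfb]
  refine ⟨F, ⟨fun a b h => hfG _ h, ?_, ?_⟩, ?_, ?_⟩
  · rw [isAcyclic_iff_forall_adj_isBridge]
    intro a b hab
    rw [isBridge_iff]
    intro hr
    obtain ⟨q, hq⟩ := hr.exists_isPath
    have hle : F.deleteEdges {s(a, b)} ≤ F := deleteEdges_le _
    have := key a b (q.mapLe hle) ((Walk.isPath_mapLe hle).2 hq) (hfG _ hab)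
    rw [Walk.edges_mapLe_eq_edges] at this
    have := q.edges_subset_edgeSet this
    simp at this
  · intro a b hr hab
    obtain ⟨q, hq⟩ := hr.exists_isPath
    exact q.edges_subset_edgeSet (key a b q hq hab)
  · rw [← ZMod.natCast_eq_zero_iff_even, hdeg]
    simp [ind, two_self]
  · intro w hw
    rw [← ZMod.natCast_eq_one_iff_odd, hdeg]
    simp [ind, hw]
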